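/- arXiv:1505.00352 — 2 statements merged into one kernel-verified Lean document; each statement's English description precedes it below -/
import Mathlib

section
/- For every integer n ≥ 0 and every commutative ring element (or indeterminate) x, ∑_{k=0}^{n} t_{n,k} x^k = x(x+n)^{n-1}, where t_{n,k} is the number of forests on n labeled vertices consisting of exactly k rooted trees. -/
/-- `rootedForestCount n k` is the number of rooted forests on the `n` labeled
vertices `Fin n` consisting of exactly `k` rooted trees: pairs of an acyclic
simple graph together with a set of roots containing exactly one vertex in each
connected component, where the number of connected components is `k`. -/
noncomputable def rootedForestCount (n k : ℕ) : ℕ :=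
  Nat.card {p : SimpleGraph (Fin n) × Set (Fin n) //
    p.1.IsAcyclic ∧
    (∀ c : p.1.ConnectedComponent, ∃! r, r ∈ p.2 ∧ p.1.connectedComponentMk r = c) ∧
    Nat.card p.1.ConnectedComponent = k}


open SimpleGraph

/-- Parent functions: each `w : W` is sent to an outside element or to its parent, with no
infinite chain of parents. -/
def PF (W S : Type) : Type :=
  {f : W → S ⊕ W // WellFounded fun a b => f b = Sum.inr a}

instance pfFinite (W S : Type) [Finite W] [Finite S] : Finite (PF W S) :=
  inferInstanceAs (Finite {f : W → S ⊕ W // WellFounded fun a b => f b = Sum.inr a})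

noncomputable instance pfFintype (W S : Type) [Finite W] [Finite S] : Fintype (PF W S) :=
  Fintype.ofFinite _

/-- The graph of a parent function. -/
def pfGraph {V : Type} (f : V → Unit ⊕ V) (hf : WellFounded fun a b => f b = Sum.inr a) :
    SimpleGraph V where
  Adj u v := f u = Sum.inr v ∨ f v = Sum.inr u
  symm := ⟨fun _ _ h => h.symm⟩
  loopless := ⟨fun v h => by
    have h1 : f v = Sum.inr v := by tauto
    exact hf.irrefl.irrefl v h1⟩

lemma reach_inv {V : Type} (G : SimpleGraph V) (P : V → Prop)
    (h : ∀ u v, G.Adj u v → P u → P v) {u v : V} (huv : G.Reachable u v) (hu : P u) : P v := by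
  obtain ⟨p⟩ := huv
  induction p with
  | nil => exact hu
  | cons hadj _ ih => exact ih (h _ _ hadj hu)

lemma pf_root {V : Type} (f : V → Unit ⊕ V) (hf : WellFounded fun a b => f b = Sum.inr a) :
    ∀ v, ∃ r, f r = Sum.inl () ∧ (pfGraph f hf).Reachable v r := by
  intro v
  induction v using hf.induction with
  | _ v ih =>
    rcases hv : f v with a | u
    · exact ⟨v, hv, Reachable.refl _⟩
    · obtain ⟨r, hr, hr'⟩ := ih u hv
      refine ⟨r, hr, Reachable.trans (Adj.reachable ?_) hr'⟩
      exact Or.inl hv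

lemma pf_root_desc {V : Type} (f : V → Unit ⊕ V) (hf : WellFounded fun a b => f b = Sum.inr a)
    {r v : V} (hr : f r = Sum.inl ()) (h : (pfGraph f hf).Reachable r v) :
    Relation.ReflTransGen (fun a b => f b = Sum.inr a) r v := by
  refine reach_inv (pfGraph f hf) (fun v => Relation.ReflTransGen (fun a b => f b = Sum.inr a) r v)
    ?_ h .refl
  intro u v huv hu
  rcases huv with h1 | h1
  · rcases Relation.ReflTransGen.cases_tail hu with h2 | ⟨c, h2, h3⟩
    · subst h2
      simp [hr] at h1
    · rw [h1] at h3
      cases h3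
      exact h2
  · exact hu.tail h1

lemma pf_acyclic {V : Type} (f : V → Unit ⊕ V) (hf : WellFounded fun a b => f b = Sum.inr a) :
    (pfGraph f hf).IsAcyclic := by
  have key : ∀ v w, f v = Sum.inr w → (pfGraph f hf).IsBridge s(v, w) := by
    intro v w hvw
    rw [isBridge_iff]
    intro hreach
    have h2 : Relation.ReflTransGen (fun a b => f b = Sum.inr a) v w := by
      refine reach_inv _ (fun u => Relation.ReflTransGen (fun a b => f b = Sum.inr a) v u)
        ?_ hreach .refl
      intro a b hab ha
      rw [deleteEdges_adj] at hab
      obtain ⟨hab, hne⟩ := hab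
      rcases hab with h1 | h1
      · rcases Relation.ReflTransGen.cases_tail ha with h2 | ⟨c, h2, h3⟩
        · subst h2
          rw [h1] at hvw
          cases hvw
          simp at hne
        · rw [h1] at h3
          cases h3
          exact h2
      · exact ha.tail h1
    have h3 : Relation.TransGen (fun a b => f b = Sum.inr a) v v :=
      Relation.TransGen.tail' h2 hvw
    exact hf.transGen.irrefl.irrefl v h3
  rw [isAcyclic_iff_forall_adj_isBridge]
  intro v w hvw
  rcases hvw with h | h
  · exact key v w h
  · rw [Sym2.eq_swap]
    exact key w v h

/-- Validity of a pair (graph, root set). -/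
abbrev Valid {V : Type} (p : SimpleGraph V × Set V) : Prop :=
  p.1.IsAcyclic ∧
    (∀ c : p.1.ConnectedComponent, ∃! r, r ∈ p.2 ∧ p.1.connectedComponentMk r = c)

lemma pf_valid {V : Type} (f : V → Unit ⊕ V) (hf : WellFounded fun a b => f b = Sum.inr a) :
    Valid (pfGraph f hf, {v | f v = Sum.inl ()}) := by
  refine ⟨pf_acyclic f hf, ?_⟩
  intro c
  induction c using ConnectedComponent.ind with
  | _ v =>
    obtain ⟨r, hr, hvr⟩ := pf_root f hf v
    refine ⟨r, ⟨hr, ConnectedComponent.sound hvr.symm⟩, ?_⟩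
    rintro r' ⟨hr', h⟩
    have h1 : (pfGraph f hf).Reachable r' v := ConnectedComponent.exact h
    have h2 := pf_root_desc f hf hr' (h1.trans hvr)
    rcases Relation.ReflTransGen.cases_tail h2 with h3 | ⟨c, _, h3⟩
    · exact h3.symm
    · rw [hr] at h3
      cases h3

/-- The map from parent functions to rooted forests. -/
def toForest {V : Type} (f : PF V Unit) : {p : SimpleGraph V × Set V // Valid p} :=
  ⟨(pfGraph f.1 f.2, {v | f.1 v = Sum.inl ()}), pf_valid f.1 f.2⟩

lemma toForest_inj {V : Type} : Function.Injective (toForest (V := V)) := by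
  rintro ⟨f, hf⟩ ⟨g, hg⟩ h
  simp only [toForest, Subtype.mk.injEq, Prod.mk.injEq] at h
  obtain ⟨hG, hS⟩ := h
  apply Subtype.ext
  funext v
  change f v = g v
  induction v using hf.induction with
  | _ v ih =>
    rcases hv : f v with ⟨⟩ | u
    · have : v ∈ {v | f v = Sum.inl ()} := hv
      rw [hS] at this
      exact this.symm
    · have h1 := ih u hv
      have h2 : (pfGraph f hf).Adj v u := Or.inl hv
      rw [hG] at h2
      rcases h2 with h2 | h2
      · exact h2.symm
      · rw [← h1] at h2
        exact absurd h2 (hf.asymmetric _ _ hv)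

lemma toForest_surj {V : Type} : Function.Surjective (toForest (V := V)) := by
  classical
  rintro ⟨⟨G, S⟩, hG, hS⟩
  dsimp only at hG hS
  choose r hr using fun v => (hS (G.connectedComponentMk v)).exists
  have huniq : ∀ a b, a ∈ S → b ∈ S → G.Reachable a b → a = b := fun a b ha hb hab =>
    (hS (G.connectedComponentMk b)).unique ⟨ha, ConnectedComponent.sound hab⟩ ⟨hb, rfl⟩
  have hreach : ∀ v, G.Reachable v (r v) := fun v => (ConnectedComponent.exact (hr v).2).symm
  have hpar : ∀ v, v ∉ S → ∃ u, G.Adj v u ∧ G.dist u (r v) < G.dist v (r v) := by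
    intro v hv
    obtain ⟨p, hp⟩ := (hreach v).exists_walk_length_eq_dist
    have hne : v ≠ r v := fun h => hv (h ▸ (hr v).1)
    generalize r v = z at p hp hne
    cases p with
    | nil => exact absurd rfl hne
    | cons h q =>
      refine ⟨_, h, ?_⟩
      rw [← hp, Walk.length_cons]
      exact Nat.lt_succ_of_le (dist_le q)
  choose par hadj hlt using hpar
  let f : V → Unit ⊕ V := fun v => if h : v ∈ S then Sum.inl () else Sum.inr (par v h)
  have hfS : ∀ v, f v = Sum.inl () ↔ v ∈ S := by
    intro v
    by_cases h : v ∈ S <;> simp [f, h]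
  have hfp : ∀ v u, f v = Sum.inr u → G.Adj v u ∧ G.dist u (r v) < G.dist v (r v) := by
    intro v u h
    by_cases h' : v ∈ S
    · simp [f, h'] at h
    · simp only [f, h', dite_false, Sum.inr.injEq] at h
      subst h
      exact ⟨hadj v h', hlt v h'⟩
  have hf : WellFounded fun a b => f b = Sum.inr a := by
    refine Subrelation.wf (r := InvImage (· < ·) fun v => G.dist v (r v)) ?_ (InvImage.wf _ wellFounded_lt)
    intro a b hab
    obtain ⟨h1, h2⟩ := hfp b a hab
    have : r a = r b := huniq _ _ (hr a).1 (hr b).1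
      ((hreach a).symm.trans (h1.symm.reachable.trans (hreach b)))
    change G.dist a (r a) < G.dist b (r b)
    rwa [this]
  have hle : pfGraph f hf ≤ G := by
    intro a b hab
    rcases hab with h | h
    · exact (hfp _ _ h).1
    · exact (hfp _ _ h).1.symm
  refine ⟨⟨f, hf⟩, ?_⟩
  apply Subtype.ext
  refine Prod.ext ?_ ?_
  · change pfGraph f hf = G
    apply le_antisymm hle
    intro u v huv
    by_contra hnot
    obtain ⟨a, ha, hua⟩ := pf_root f hf u
    obtain ⟨b, hb, hvb⟩ := pf_root f hf v
    have hab : a = b := huniq a b ((hfS a).1 ha) ((hfS b).1 hb)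
      ((hua.mono hle).symm.trans (huv.reachable.trans (hvb.mono hle)))
    subst hab
    have h1 : (pfGraph f hf).Reachable u v := hua.trans hvb.symm
    have h2 := isAcyclic_iff_forall_adj_isBridge.1 hG huv
    rw [isBridge_iff] at h2
    apply h2
    refine h1.mono ?_
    intro x y hxy
    rw [deleteEdges_adj]
    refine ⟨hle hxy, ?_⟩
    intro he
    rw [Set.mem_singleton_iff, Sym2.eq_iff] at he
    rcases he with ⟨rfl, rfl⟩ | ⟨rfl, rfl⟩
    · exact hnot hxy
    · exact hnot hxy.symm
  · ext v
    exact hfS v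

lemma card_comp {V : Type} (p : SimpleGraph V × Set V) (h : Valid p) :
    Nat.card p.1.ConnectedComponent = Nat.card p.2 := by
  symm
  refine Nat.card_eq_of_bijective (fun v : p.2 => p.1.connectedComponentMk v.1) ⟨?_, ?_⟩
  · intro a b hab
    exact Subtype.ext ((h.2 (p.1.connectedComponentMk b.1)).unique ⟨a.2, hab⟩ ⟨b.2, rfl⟩)
  · intro c
    obtain ⟨r, hr, -⟩ := h.2 c
    exact ⟨⟨r, hr.1⟩, hr.2⟩

open Classical in
/-- The vertices sent outside. -/
noncomputable def pfRoots {W S : Type} [Fintype W] (f : PF W S) : Finset W :=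
  Finset.univ.filter fun w => (f.1 w).isLeft

lemma mem_pfRoots {W S : Type} [Fintype W] (f : PF W S) (w : W) :
    w ∈ pfRoots f ↔ (f.1 w).isLeft := by
  unfold pfRoots
  rw [Finset.mem_filter]
  simp

/-- The bijection between parent functions and rooted forests. -/
noncomputable def forestEquiv (V : Type) : PF V Unit ≃ {p : SimpleGraph V × Set V // Valid p} :=
  Equiv.ofBijective toForest ⟨toForest_inj, toForest_surj⟩

open Classical in
lemma count_eq (n k : ℕ) : rootedForestCount n k =
    (Finset.univ.filter fun f : PF (Fin n) Unit => (pfRoots f).card = k).card := by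
  rw [← Fintype.card_subtype, ← Nat.card_eq_fintype_card]
  symm
  refine Nat.card_congr ?_
  have e1 : {f : PF (Fin n) Unit // (pfRoots f).card = k} ≃
      {p : {p : SimpleGraph (Fin n) × Set (Fin n) // Valid p} //
        Nat.card p.1.1.ConnectedComponent = k} := by
    refine (forestEquiv (Fin n)).subtypeEquiv ?_
    intro f
    rw [card_comp _ (forestEquiv (Fin n) f).2]
    have : Nat.card ((forestEquiv (Fin n) f).1.2) = (pfRoots f).card := by
      rw [Nat.card_coe_set_eq, ← Set.ncard_coe_finset]
      congr 1
      ext v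
      rw [Finset.mem_coe, mem_pfRoots]
      change f.1 v = Sum.inl () ↔ _
      rcases f.1 v with ⟨⟩ | u <;> simp
    rw [this]
  refine e1.trans ?_
  refine (Equiv.subtypeSubtypeEquivSubtypeInter (fun p : SimpleGraph (Fin n) × Set (Fin n) =>
    Valid p) (fun p => Nat.card p.1.ConnectedComponent = k)).trans (Equiv.subtypeEquivRight ?_)
  intro p
  simp only [Valid, and_assoc]

/-- Gluing. -/
def glueFun {W S : Type} [DecidableEq W] (U : Finset W)
    (h : U → S) (g : {w // w ∉ U} → U ⊕ {w // w ∉ U}) : W → S ⊕ W :=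
  fun w => if hw : w ∈ U then Sum.inl (h ⟨w, hw⟩)
    else Sum.inr (Sum.elim (fun u => u.1) (fun u => u.1) (g ⟨w, hw⟩))

lemma glue_wf {W S : Type} [DecidableEq W] (U : Finset W)
    (h : U → S) (g : {w // w ∉ U} → U ⊕ {w // w ∉ U}) 
    (hg : WellFounded fun a b => g b = Sum.inr a) :
    WellFounded fun a b => glueFun U h g b = Sum.inr a := by
  have h1 : ∀ w ∈ U, Acc (fun a b => glueFun U h g b = Sum.inr a) w := by
    intro w hw
    constructor
    intro y hy
    simp [glueFun, hw] at hy
  have h2 : ∀ w : {w // w ∉ U}, Acc (fun a b => glueFun U h g b = Sum.inr a) w.1 := by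
    intro w
    induction w using hg.induction with
    | _ w ih =>
      constructor
      intro y hy
      simp only [glueFun, w.2, dite_false, Sum.inr.injEq] at hy
      rcases hgw : g w with u | u
      · have : u.1 = y := by simpa [hgw] using hy
        exact this ▸ h1 u.1 u.2
      · have : u.1 = y := by simpa [hgw] using hy
        exact this ▸ ih u hgw
  exact ⟨fun w => if hw : w ∈ U then h1 w hw else h2 ⟨w, hw⟩⟩

open Classical in
lemma fiber_card {W S : Type} [Fintype W] [Fintype S] (U : Finset W) :
    (Finset.univ.filter fun f : PF W S => pfRoots f = U).card
      = Fintype.card S ^ U.card * Fintype.card (PF {w // w ∉ U} U) := by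
  have : Fintype.card S ^ U.card * Fintype.card (PF {w // w ∉ U} U)
      = Fintype.card ((U → S) × PF {w // w ∉ U} U) := by
    simp
  rw [this, ← Fintype.card_subtype]
  symm
  have hroots : ∀ x : (U → S) × PF {w // w ∉ U} U,
      pfRoots (⟨glueFun U x.1 x.2.1, glue_wf U x.1 x.2.1 x.2.2⟩ : PF W S) = U := by
    intro x
    ext w
    refine (mem_pfRoots _ _).trans ?_
    change (glueFun U x.1 x.2.1 w).isLeft = true ↔ w ∈ U
    by_cases hw : w ∈ U <;> simp [glueFun, hw]
  refine Fintype.card_of_bijective (f := fun x : (U → S) × PF {w // w ∉ U} U =>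
    (⟨⟨glueFun U x.1 x.2.1, glue_wf U x.1 x.2.1 x.2.2⟩, hroots x⟩ :
      {f : PF W S // pfRoots f = U})) ⟨?_, ?_⟩
  · rintro ⟨h, g, hg⟩ ⟨h', g', hg'⟩ heq
    have heq' : glueFun U h g = glueFun U h' g' :=
      congrArg (fun z : {f : PF W S // pfRoots f = U} => z.1.1) heq
    have e := fun w => congrFun heq' w
    have e1 : h = h' := by
      funext u
      have := e u.1
      simpa [glueFun] using this
    have e2 : g = g' := by
      funext w
      have := e w.1
      simp only [glueFun, w.2, dite_false, Sum.inr.injEq] at this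
      rcases h1 : g w with a | a <;> rcases h2 : g' w with b | b <;>
        simp only [h1, h2, Sum.elim_inl, Sum.elim_inr] at this
      · rw [Subtype.ext this]
      · exact absurd (this ▸ a.2) b.2
      · exact absurd (this ▸ b.2) a.2
      · rw [Subtype.ext this]
    subst e1 e2
    rfl
  · rintro ⟨⟨f, hf⟩, hU⟩
    have hl : ∀ w, w ∈ U ↔ (f w).isLeft := by
      intro w
      rw [← hU]
      exact mem_pfRoots _ _
    have hl1 : ∀ u : U, ∃ s, f u.1 = Sum.inl s := fun u => Sum.isLeft_iff.1 ((hl u.1).1 u.2)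
    have hl2 : ∀ w : {w // w ∉ U}, ∃ v, f w.1 = Sum.inr v := fun w => by
      have := w.2
      rw [hl, Sum.not_isLeft] at this
      exact Sum.isRight_iff.1 this
    choose h hh using hl1
    choose q hq using hl2
    let g : {w // w ∉ U} → U ⊕ {w // w ∉ U} := fun w =>
      if hw : q w ∈ U then Sum.inl ⟨q w, hw⟩ else Sum.inr ⟨q w, hw⟩
    have hg : WellFounded fun a b => g b = Sum.inr a := by
      refine Subrelation.wf (r := InvImage (fun a b => f b = Sum.inr a) Subtype.val) ?_
        (InvImage.wf _ hf)
      intro a b hab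
      change f b.1 = Sum.inr a.1
      rw [hq]
      by_cases hw : q b ∈ U
      · simp [g, hw] at hab
      · simp only [g, hw, dite_false, Sum.inr.injEq] at hab
        rw [← hab]
    refine ⟨(h, ⟨g, hg⟩), ?_⟩
    apply Subtype.ext
    apply Subtype.ext
    funext w
    change glueFun U h g w = f w
    by_cases hw : w ∈ U
    · simp only [glueFun, hw, dite_true]
      exact (hh ⟨w, hw⟩).symm
    · simp only [glueFun, hw, dite_false]
      rw [hq ⟨w, hw⟩]
      congr 1
      by_cases hw' : q ⟨w, hw⟩ ∈ U <;> simp [g, hw']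

open Classical in
lemma card_empty_left (W S : Type) [Fintype W] [Fintype S] (h : Fintype.card W = 0) :
    Fintype.card (PF W S) = 1 := by
  have := Fintype.card_eq_zero_iff.1 h
  rw [Fintype.card_eq_one_iff]
  refine ⟨⟨isEmptyElim, ⟨isEmptyElim⟩⟩, ?_⟩
  intro y
  apply Subtype.ext
  funext w
  exact isEmptyElim w

open Classical in
lemma card_empty_right (W S : Type) [Fintype W] [Fintype S] [Nonempty W]
    (h : Fintype.card S = 0) :
    Fintype.card (PF W S) = 0 := by
  have := Fintype.card_eq_zero_iff.1 h
  rw [Fintype.card_eq_zero_iff]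
  refine ⟨fun f => ?_⟩
  obtain ⟨m, -, hm⟩ := f.2.has_min Set.univ Set.univ_nonempty
  rcases hfm : f.1 m with a | a
  · exact isEmptyElim a
  · exact hm a trivial hfm

open Classical in
lemma weighted {R : Type*} [CommSemiring R] (x : R) (m : ℕ)
    (IH : ∀ m' < m, ∀ (W S : Type) [Fintype W] [Fintype S], Fintype.card W = m' + 1 →
      Fintype.card (PF W S) = Fintype.card S * (Fintype.card S + (m' + 1)) ^ m')
    (W S : Type) [Fintype W] [Fintype S] (hW : Fintype.card W = m + 1) :
    ∑ f : PF W S, x ^ (pfRoots f).card =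
      (Fintype.card S * x) * (Fintype.card S * x + (m + 1 : ℕ)) ^ m := by
  have hne : Nonempty W := Fintype.card_pos_iff.1 (by omega)
  rw [← Finset.sum_fiberwise Finset.univ pfRoots]
  have h1 : ∀ U : Finset W, ∑ f : PF W S with pfRoots f = U, x ^ (pfRoots f).card
      = (fun k : ℕ => (Fintype.card S * x) ^ k *
        ((if k = 0 then 0 else if k = m + 1 then 1 else k * (m + 1) ^ (m - k) : ℕ) : R)) U.card := by
    intro U
    rw [Finset.sum_congr rfl (g := fun _ => x ^ U.card)
      (fun f hf => by rw [(Finset.mem_filter.1 hf).2]), Finset.sum_const, fiber_card]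
    have hc : Fintype.card {w // w ∉ U} = m + 1 - U.card := by
      rw [Fintype.card_subtype_compl, hW, Fintype.card_coe]
    have hle : U.card ≤ m + 1 := hW ▸ Finset.card_le_univ U
    have : Fintype.card (PF {w // w ∉ U} U) =
        if U.card = 0 then 0 else if U.card = m + 1 then 1 else U.card * (m + 1) ^ (m - U.card) := by
      split_ifs with h h'
      · have : Nonempty {w // w ∉ U} := Fintype.card_pos_iff.1 (by omega)
        exact card_empty_right _ _ (by simpa using h)
      · exact card_empty_left _ _ (by omega)
      · rw [IH (m - U.card) (by omega) _ _ (by omega), Fintype.card_coe]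
        congr 2
        omega
    rw [this]
    simp only [nsmul_eq_mul, Nat.cast_mul, Nat.cast_pow]
    ring
  rw [Finset.sum_congr rfl (fun U _ => h1 U), ← Finset.powerset_univ,
    Finset.sum_powerset_apply_card (fun k : ℕ => (Fintype.card S * x) ^ k *
        ((if k = 0 then 0 else if k = m + 1 then 1 else k * (m + 1) ^ (m - k) : ℕ) : R)), Finset.card_univ, hW, Finset.sum_range_succ']
  simp only [if_true, Nat.cast_zero, mul_zero, smul_zero, add_zero]
  rw [add_pow, Finset.mul_sum]
  refine Finset.sum_congr rfl ?_
  intro j hj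
  have hj : j ≤ m := by simpa [Nat.lt_succ_iff] using hj
  have key : (m + 1).choose (j + 1) * (if j + 1 = 0 then 0 else if j + 1 = m + 1 then 1
      else (j + 1) * (m + 1) ^ (m - (j + 1))) = (m + 1) ^ (m - j) * m.choose j := by
    rw [if_neg (by omega)]
    split_ifs with h
    · have : j = m := by omega
      subst this
      simp
    · have h2 := Nat.add_one_mul_choose_eq m j
      have h3 : m - j = (m - (j + 1)) + 1 := by omega
      rw [h3, pow_succ, ← mul_assoc, ← h2]
      ring
  rw [nsmul_eq_mul, mul_left_comm, ← Nat.cast_mul, key]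
  push_cast
  ring

open Classical in
lemma pf_card (m : ℕ) : ∀ (W S : Type) [Fintype W] [Fintype S], Fintype.card W = m + 1 →
      Fintype.card (PF W S) = Fintype.card S * (Fintype.card S + (m + 1)) ^ m := by
  induction m using Nat.strong_induction_on with
  | _ m ih =>
    intro W S _ _ hW
    have := weighted (1 : ℕ) m ih W S hW
    simpa using this

theorem stmt_3 (R : Type*) [CommRing R] (n : ℕ) (hn : 1 ≤ n) (x : R) :
    ∑ k ∈ Finset.range (n + 1), (rootedForestCount n k : R) * x ^ k
      = x * (x + (n : R)) ^ (n - 1) := by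
  classical
  obtain ⟨m, rfl⟩ : ∃ m, n = m + 1 := ⟨n - 1, by omega⟩
  have h := weighted x m (fun m' _ => pf_card m') (Fin (m + 1)) Unit (by simp)
  simp only [Fintype.card_unit, Nat.cast_one, one_mul] at h
  rw [Nat.add_sub_cancel, ← h,
    ← Finset.sum_fiberwise_of_maps_to (s := Finset.univ) (t := Finset.range (m + 1 + 1))
      (g := fun f : PF (Fin (m + 1)) Unit => (pfRoots f).card)]
  · refine Finset.sum_congr rfl ?_
    intro k _
    rw [Finset.sum_congr rfl (g := fun _ => x ^ k)
      (fun f hf => by rw [(Finset.mem_filter.1 hf).2]), Finset.sum_const, nsmul_eq_mul, count_eq]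
  · intro f _
    have := Finset.card_le_univ (pfRoots f)
    rw [Fintype.card_fin] at this
    exact Finset.mem_range.2 (by omega)
end

section
/- For every integer n ≥ 1, the number of rooted forests on n labeled vertices (with any number of components) equals (n+1)^{n-1}. -/
/-- A partial "parent function" with no cycles. -/
def Acyc {V X : Type} (f : V → V ⊕ X) : Prop :=
  WellFounded (fun a b => f b = Sum.inl a)

def glue {V X : Type} [DecidableEq V] (S : Finset V) (h : {v // v ∈ S} → X)
    (g : {v // v ∉ S} → {v // v ∉ S} ⊕ {v // v ∈ S}) : V → V ⊕ X :=
  fun v => if hv : v ∈ S then Sum.inr (h ⟨v, hv⟩) else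
    Sum.inl (Sum.elim Subtype.val Subtype.val (g ⟨v, hv⟩))

theorem glue_acyc {V X : Type} [DecidableEq V] (S : Finset V) (h : {v // v ∈ S} → X)
    (g : {v // v ∉ S} → {v // v ∉ S} ⊕ {v // v ∈ S}) :
    Acyc (glue S h g) ↔ Acyc g := by
  constructor
  · intro H
    refine Subrelation.wf ?_ (InvImage.wf Subtype.val H)
    rintro ⟨a, ha⟩ ⟨b, hb⟩ hab
    simp [InvImage, glue, hb, hab]
  · intro H
    have h1 : ∀ v ∈ S, Acc (fun a b => glue S h g b = Sum.inl a) v := by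
      intro v hv
      refine ⟨_, fun y hy => ?_⟩
      simp [glue, hv] at hy
    have h2 : ∀ v : {v // v ∉ S}, Acc (fun a b => glue S h g b = Sum.inl a) v.1 := by
      intro v
      induction v using H.induction with
      | _ v ih =>
        refine ⟨_, fun y hy => ?_⟩
        by_cases hyS : y ∈ S
        · exact h1 y hyS
        · refine ih ⟨y, hyS⟩ ?_
          obtain ⟨v, hv⟩ := v
          simp only [glue, hv, not_false_eq_true, dite_false, Sum.inl.injEq] at hy
          rcases hg : g ⟨v, hv⟩ with w | w
          · simp [hg] at hy
            simp [← hy]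
          · simp [hg] at hy
            exact absurd (hy ▸ w.2) hyS
    refine ⟨fun v => ?_⟩
    by_cases hv : v ∈ S
    · exact h1 v hv
    · exact h2 ⟨v, hv⟩

theorem glue_isRight {V X : Type} [DecidableEq V] (S : Finset V) (h : {v // v ∈ S} → X)
    (g : {v // v ∉ S} → {v // v ∉ S} ⊕ {v // v ∈ S}) (v : V) :
    v ∈ S ↔ (glue S h g v).isRight := by
  by_cases hv : v ∈ S <;> simp [glue, hv]

theorem glue_bij (V X : Type) [Fintype V] [DecidableEq V] :
    Function.Bijective (fun t : (Σ S : Finset V, ({v // v ∈ S} → X) ×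
      {g : {v // v ∉ S} → {v // v ∉ S} ⊕ {v // v ∈ S} // Acyc g}) =>
      (⟨glue t.1 t.2.1 t.2.2.1, (glue_acyc _ _ _).2 t.2.2.2⟩ : {f : V → V ⊕ X // Acyc f})) := by
  constructor
  · rintro ⟨S, h, g, hg⟩ ⟨S', h', g', hg'⟩ heq
    simp only [Subtype.mk.injEq] at heq
    have hS : S = S' := by
      ext v
      rw [glue_isRight S h g, glue_isRight S' h' g', heq]
    subst hS
    have e1 : h = h' := by
      funext ⟨v, hv⟩
      have := congrFun heq v
      simpa [glue, hv] using this
    have e2 : g = g' := by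
      funext ⟨v, hv⟩
      have := congrFun heq v
      simp only [glue, hv, not_false_eq_true, dite_false, Sum.inl.injEq] at this
      generalize g ⟨v, hv⟩ = u at this ⊢
      generalize g' ⟨v, hv⟩ = u' at this ⊢
      rcases u with ⟨a, ha⟩ | ⟨a, ha⟩ <;> rcases u' with ⟨b, hb⟩ | ⟨b, hb⟩ <;>
        simp only [Sum.elim_inl, Sum.elim_inr] at this <;> subst this <;> first | rfl | contradiction
    subst e1 e2
    rfl
  · rintro ⟨f, hf⟩
    let S : Finset V := Finset.univ.filter (fun v => (f v).isRight)
    have hS : ∀ v, v ∈ S ↔ (f v).isRight := by simp [S]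
    let h : {v // v ∈ S} → X := fun v => (f v.1).getRight ((hS _).1 v.2)
    have hl : ∀ v, v ∉ S → (f v).isLeft := by
      intro v hv
      rw [hS] at hv
      simpa using hv
    let g : {v // v ∉ S} → {v // v ∉ S} ⊕ {v // v ∈ S} := fun v =>
      if hw : (f v.1).getLeft (hl _ v.2) ∈ S then Sum.inr ⟨_, hw⟩ else Sum.inl ⟨_, hw⟩
    have hfg : glue S h g = f := by
      funext v
      by_cases hv : v ∈ S
      · simp [glue, hv, h]
      · simp only [glue, hv, not_false_eq_true, dite_false, g]
        split_ifs <;> simp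
    exact ⟨⟨S, h, g, (glue_acyc S h g).1 (hfg ▸ hf)⟩, Subtype.ext hfg⟩

theorem acyc_empty {V X : Type} [Nonempty V] [IsEmpty X] (f : V → V ⊕ X) : ¬ Acyc f := by
  intro H
  obtain ⟨m, -, hm⟩ := H.has_min Set.univ Set.univ_nonempty
  rcases hfm : f m with w | w
  · exact hm w trivial hfm
  · exact isEmptyElim w

def AA (n x : ℕ) : ℕ := if n = 0 then 1 else x * (x + n) ^ (n - 1)

theorem AA_rec (N x : ℕ) :
    ∑ k ∈ Finset.range (N + 2), (N + 1).choose k * (x ^ k * AA (N + 1 - k) k) = AA (N + 1) x := by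
  rw [Finset.sum_range_succ']
  simp only [AA, Nat.add_eq_zero_iff, one_ne_zero, and_false, if_false, Nat.sub_zero, zero_mul,
    mul_zero, add_zero, Nat.add_sub_cancel]
  rw [add_pow, Finset.mul_sum]
  refine Finset.sum_congr rfl fun j hj => ?_
  have hj : j ≤ N := by simpa [Nat.lt_succ_iff] using hj
  rcases hj.eq_or_lt with rfl | hlt
  · simp [pow_succ, mul_comm]
  · obtain ⟨d, rfl⟩ := Nat.exists_eq_add_of_lt hlt
    have e1 : j + d + 1 + 1 - (j + 1) = d + 1 := by omega
    have e2 : j + d + 1 - j = d + 1 := by omega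
    have e3 : j + 1 + (d + 1) = j + d + 1 + 1 := by omega
    have key := Nat.add_one_mul_choose_eq (j + d + 1) j
    rw [e1, e2, if_neg (by omega), Nat.add_sub_cancel, e3]
    calc _ = ((j + d + 1 + 1).choose (j + 1) * (j + 1)) * (x ^ (j+1) * (j + d + 1 + 1) ^ d) := by ring
      _ = _ := by rw [← key, Nat.cast_id]; ring

theorem count (n : ℕ) : ∀ (V X : Type) [Fintype V] [Fintype X], Fintype.card V = n →
    Nat.card {f : V → V ⊕ X // Acyc f} = AA n (Fintype.card X) := by
  classical
  induction n using Nat.strong_induction_on with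
  | _ n ih =>
    intro V X _ _ hV
    rcases n with _ | N
    · have : IsEmpty V := Fintype.card_eq_zero_iff.1 hV
      have : Unique {f : V → V ⊕ X // Acyc f} :=
        { default := ⟨isEmptyElim, ⟨isEmptyElim⟩⟩
          uniq := fun f => Subtype.ext (Subsingleton.elim _ _) }
      simp [AA]
    · have : Nonempty V := Fintype.card_pos_iff.1 (by omega)
      rw [← Nat.card_congr (Equiv.ofBijective _ (glue_bij V X)), Nat.card_sigma, ← AA_rec]
      have : ∀ S : Finset V, Nat.card (({v // v ∈ S} → X) ×
          {g : {v // v ∉ S} → {v // v ∉ S} ⊕ {v // v ∈ S} // Acyc g}) =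
          (fun k => Fintype.card X ^ k * AA (N + 1 - k) k) S.card := by
        intro S
        rw [Nat.card_prod]
        rcases S.eq_empty_or_nonempty with rfl | hS
        · have : Nonempty {v : V // v ∉ (∅ : Finset V)} := ⟨⟨Classical.arbitrary V, by simp⟩⟩
          have : IsEmpty {g : {v // v ∉ (∅ : Finset V)} →
            {v // v ∉ (∅ : Finset V)} ⊕ {v // v ∈ (∅ : Finset V)} // Acyc g} :=
            ⟨fun g => acyc_empty g.1 g.2⟩
          simp [AA]
        · have hpos := hS.card_pos
          have hc : Fintype.card {v // v ∉ S} = N + 1 - S.card := by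
            rw [Fintype.card_subtype_compl]
            simp [hV]
          rw [ih (N + 1 - S.card) (by omega) _ _ hc]
          simp
      rw [Finset.sum_congr rfl fun S _ => this S, ← Finset.powerset_univ,
        Finset.sum_powerset_apply_card (fun k => Fintype.card X ^ k * AA (N + 1 - k) k)]
      simp [hV]

section graph
variable {V : Type}

def toG (f : V → V ⊕ Unit) (hf : Acyc f) : SimpleGraph V where
  Adj a b := f a = Sum.inl b ∨ f b = Sum.inl a
  symm := ⟨fun _ _ h => h.symm⟩
  loopless := ⟨fun a h => hf.irrefl.irrefl a (by simpa using h)⟩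

theorem exists_root (f : V → V ⊕ Unit) (hf : Acyc f) (x : V) :
    ∃ r, f r = Sum.inr () ∧ (toG f hf).Reachable x r := by
  induction x using hf.induction with
  | _ x ih =>
    rcases hx : f x with p | u
    · obtain ⟨r, hr, hp⟩ := ih p hx
      exact ⟨r, hr, (SimpleGraph.Adj.reachable (Or.inl hx : (toG f hf).Adj x p)).trans hp⟩
    · exact ⟨x, hx, SimpleGraph.Reachable.refl _⟩

theorem reach_inv_s4 {W : Type*} (G : SimpleGraph V) (ρ : V → W) (h : ∀ a b, G.Adj a b → ρ a = ρ b)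
    {a b : V} (hab : G.Reachable a b) : ρ a = ρ b := by
  obtain ⟨w⟩ := hab
  induction w with
  | nil => rfl
  | cons hadj _ ih => exact (h _ _ hadj).trans ih

theorem root_unique (f : V → V ⊕ Unit) (hf : Acyc f) {r s : V} (hr : f r = Sum.inr ())
    (hs : f s = Sum.inr ()) (h : (toG f hf).Reachable r s) : r = s := by
  have hρ : ∃ ρ : V → V, (∀ x, f x = Sum.inr () → ρ x = x) ∧
      (∀ x p, f x = Sum.inl p → ρ x = ρ p) := by
    let F : (x : V) → ((y : V) → f x = Sum.inl y → V) → V := fun x ih =>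
      match hx : f x with
      | Sum.inl p => ih p hx
      | Sum.inr _ => x
    refine ⟨hf.fix F, fun x hx => ?_, fun x p hx => ?_⟩
    · rw [hf.fix_eq]
      simp only [F]
      split <;> simp_all
    · rw [hf.fix_eq]
      simp only [F]
      split
      · rename_i q hq
        rw [hx] at hq
        cases hq
        rfl
      · simp_all
  obtain ⟨ρ, h1, h2⟩ := hρ
  have := reach_inv_s4 (toG f hf) ρ (by
    rintro a b (hab | hab)
    · exact h2 _ _ hab
    · exact (h2 _ _ hab).symm) h
  rwa [h1 r hr, h1 s hs] at this

theorem toG_bridge (f : V → V ⊕ Unit) (hf : Acyc f) (b p : V) (hb : f b = Sum.inl p) :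
    ¬ ((toG f hf).deleteEdges {s(b, p)}).Reachable b p := by
  intro hreach
  -- descendants of b
  let D : V → Prop := fun x => Relation.ReflTransGen (fun u v => f u = Sum.inl v) x b
  have key : ∀ x y, f x = Sum.inl y → x ≠ b → (D x ↔ D y) := by
    intro x y hxy hxb
    constructor
    · intro hx
      rcases Relation.ReflTransGen.cases_head hx with h | ⟨c, hc, hcb⟩
      · exact absurd h hxb
      · rw [hxy] at hc
        exact (Sum.inl.inj hc) ▸ hcb
    · intro hy
      exact Relation.ReflTransGen.head hxy hy
  have := reach_inv_s4 _ D (by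
    intro x y hxy
    rw [SimpleGraph.deleteEdges_adj] at hxy
    obtain ⟨h | h, hne⟩ := hxy
    · refine propext (key x y h ?_)
      rintro rfl
      rw [hb] at h
      exact hne (by simp [Sum.inl.inj h])
    · refine propext (key y x h ?_).symm
      rintro rfl
      rw [hb] at h
      exact hne (by simp [Sum.inl.inj h, Sym2.eq_swap])) hreach
  have hDp : D p := this ▸ (Relation.ReflTransGen.refl : D b)
  have hT : Relation.TransGen (fun u v => f v = Sum.inl u) b b := by
    have h1 : Relation.TransGen (fun u v => f u = Sum.inl v) b b :=
      Relation.TransGen.head' hb hDp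
    exact Relation.transGen_swap.1 h1
  exact hf.transGen.irrefl.irrefl b hT

theorem toG_acyclic (f : V → V ⊕ Unit) (hf : Acyc f) : (toG f hf).IsAcyclic := by
  rw [SimpleGraph.isAcyclic_iff_forall_adj_isBridge]
  rintro v w (h | h)
  · rw [SimpleGraph.isBridge_iff]
    exact toG_bridge f hf v w h
  · rw [Sym2.eq_swap, SimpleGraph.isBridge_iff]
    exact toG_bridge f hf w v h

def toP (f : {f : V → V ⊕ Unit // Acyc f}) : {p : SimpleGraph V × Set V //
        p.1.IsAcyclic ∧
        (∀ c : p.1.ConnectedComponent, ∃! r, r ∈ p.2 ∧ p.1.connectedComponentMk r = c)} :=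
  ⟨(toG f.1 f.2, {x | f.1 x = Sum.inr ()}), toG_acyclic f.1 f.2, by
    intro c
    induction c using SimpleGraph.ConnectedComponent.ind with
    | _ v =>
      obtain ⟨r, hr, hvr⟩ := exists_root f.1 f.2 v
      refine ⟨r, ⟨hr, SimpleGraph.ConnectedComponent.eq.2 hvr.symm⟩, ?_⟩
      rintro s ⟨hs, hsv⟩
      exact root_unique f.1 f.2 hs hr ((SimpleGraph.ConnectedComponent.eq.1 hsv).trans hvr)⟩

theorem toP_inj : Function.Injective (toP (V := V)) := by
  rintro ⟨f, hf⟩ ⟨f', hf'⟩ h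
  simp only [toP, Subtype.mk.injEq, Prod.mk.injEq] at h
  obtain ⟨hG, hR⟩ := h
  have hR : ∀ x, f x = Sum.inr () ↔ f' x = Sum.inr () := fun x => Set.ext_iff.1 hR x
  have hG : ∀ x y, (f x = Sum.inl y ∨ f y = Sum.inl x) → (f' x = Sum.inl y ∨ f' y = Sum.inl x) := by
    intro x y hxy
    have : (toG f hf).Adj x y := hxy
    rw [hG] at this
    exact this
  refine Subtype.ext (funext fun x => ?_)
  show f x = f' x
  induction x using hf.induction with
  | _ x ih =>
    rcases hx : f x with p | u
    · rcases hG x p (Or.inl hx) with h | h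
      · exact h.symm
      · rw [← ih p hx] at h
        exact absurd hx (hf.asymmetric _ _ h)
    · exact ((hR x).1 hx).symm

theorem toP_surj : Function.Surjective (toP (V := V)) := by
  classical
  rintro ⟨⟨G, R⟩, hG, hR⟩
  simp only at hG hR
  choose ρ hρ hu using fun v => hR (G.connectedComponentMk v)
  have hreach : ∀ v, G.Reachable v (ρ v) := fun v =>
    (SimpleGraph.ConnectedComponent.eq.1 (hρ v).2).symm
  have hsame : ∀ v w, G.Reachable v w → ρ v = ρ w := by
    intro v w h
    exact hu w _ ⟨(hρ v).1, (hρ v).2.trans (SimpleGraph.ConnectedComponent.eq.2 h)⟩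
  have hroot : ∀ v ∈ R, ρ v = v := fun v hv => (hu v v ⟨hv, rfl⟩).symm
  have hnext : ∀ v, v ∉ R → ∃ y, G.Adj v y ∧ G.dist y (ρ y) < G.dist v (ρ v) := by
    intro v hv
    obtain ⟨w, hw⟩ := (hreach v).exists_walk_length_eq_dist
    have hne : v ≠ ρ v := fun h => hv (h ▸ (hρ v).1)
    have hnil : ¬ w.Nil := SimpleGraph.Walk.not_nil_of_ne hne
    have ha := w.adj_snd hnil
    refine ⟨w.snd, ha, ?_⟩
    rw [← hsame v w.snd ha.reachable, ← hw, ← SimpleGraph.Walk.length_tail_add_one hnil]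
    exact Nat.lt_succ_of_le (SimpleGraph.dist_le _)
  choose nx hadj hdist using hnext
  let f : V → V ⊕ Unit := fun v => if h : v ∈ R then Sum.inr () else Sum.inl (nx v h)
  have hfl : ∀ v w, f v = Sum.inl w → ∃ h : v ∉ R, nx v h = w := by
    intro v w h
    by_cases hv : v ∈ R
    · simp [f, hv] at h
    · exact ⟨hv, by simpa [f, hv] using h⟩
  have hfr : ∀ v, f v = Sum.inr () ↔ v ∈ R := by
    intro v
    by_cases hv : v ∈ R <;> simp [f, hv]
  have hf : Acyc f := by
    refine Subrelation.wf ?_ (measure (fun v => G.dist v (ρ v))).wf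
    intro a b hab
    obtain ⟨h, rfl⟩ := hfl _ _ hab
    exact hdist b h
  have hle : toG f hf ≤ G := by
    rintro a b (h | h)
    · obtain ⟨h, rfl⟩ := hfl _ _ h
      exact hadj _ _
    · obtain ⟨h, rfl⟩ := hfl _ _ h
      exact (hadj _ _).symm
  have hr : ∀ v, (toG f hf).Reachable v (ρ v) := by
    intro v
    obtain ⟨r, h1, h2⟩ := exists_root f hf v
    have := hsame _ _ (h2.mono hle)
    rw [this, hroot r ((hfr r).1 h1)]
    exact h2
  have hGe : toG f hf = G := by
    refine le_antisymm hle ?_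
    intro a b hab
    by_contra hnot
    have hbr := (SimpleGraph.isAcyclic_iff_forall_adj_isBridge.1 hG) hab
    rw [SimpleGraph.isBridge_iff] at hbr
    have h1 : (toG f hf).Reachable a b := by
      have := hr a
      rw [hsame a b hab.reachable] at this
      exact this.trans (hr b).symm
    refine hbr (h1.mono ?_)
    intro x y hxy
    rw [SimpleGraph.deleteEdges_adj]
    refine ⟨hle hxy, fun he => hnot ?_⟩
    rw [Set.mem_singleton_iff, Sym2.eq_iff] at he
    rcases he with ⟨rfl, rfl⟩ | ⟨rfl, rfl⟩
    · exact hxy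
    · exact hxy.symm
  refine ⟨⟨f, hf⟩, Subtype.ext (Prod.ext hGe ?_)⟩
  ext v
  exact hfr v

end graph

theorem stmt_4 (n : ℕ) (hn : 1 ≤ n) :
    Nat.card {p : SimpleGraph (Fin n) × Set (Fin n) //
        p.1.IsAcyclic ∧
        (∀ c : p.1.ConnectedComponent, ∃! r, r ∈ p.2 ∧ p.1.connectedComponentMk r = c)}
      = (n + 1) ^ (n - 1) := by
  rw [← Nat.card_congr (Equiv.ofBijective (toP (V := Fin n)) ⟨toP_inj, toP_surj⟩),
    count n (Fin n) Unit (by simp)]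
  have : n ≠ 0 := by omega
  simp [AA, this, add_comm]
end
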